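/- Let F : ℝⁿ → ℝⁿ be continuously differentiable with global flow φ : ℝ → ℝⁿ → ℝⁿ, and let A ⊆ ℝⁿ be a compact set invariant under the flow (φ t '' A = A for all t ∈ ℝ). Suppose ρ : ℝⁿ → ℝ is continuously differentiable on Aᶜ, satisfies ρ x > 0 for Lebesgue-a.e. x ∈ Aᶜ, satisfies ∫_{x : dist(x, A) ≥ ε} ρ x dx < ∞ for every ε > 0, and satisfies ∇·(F ρ)(x) > 0 for Lebesgue-a.e. x ∈ Aᶜ. Then for every τ > 0, every ε > 0, and every compact set Z with positive Lebesgue measure satisfying Z ⊆ {x : dist(x, A) ≥ ε}, one has ∫_{φ (−τ) '' Z} ρ(x) dx < ∫_Z ρ(x) dx. -/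

import Mathlib

/-!
Pulling `Z` back along the flow decreases its `ρ`-mass at the rate given by the divergence:
`∫_Z ρ - ∫_{φ (-τ) '' Z} ρ = ∫₀^τ ∫_{φ (-s) '' Z} ∇·(F ρ) dx ds`, and for each `s` the inner integral
is positive because `φ (-s) '' Z` has positive measure and misses `A`. Compactness of `Z` makes the
union `K` of these pullbacks compact and disjoint from `A`, so `ρ` can be replaced by a compactly
supported `C¹` function `V` equal to `ρ` near `K` (`exists_contDiff_eqOn_nhds`).

The transport formula (`setIntegral_flow_sub`) is proved in weak form, so that differentiability of
`φ t` in the initial condition and Liouville's formula for its Jacobian are not needed. A Gronwall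
estimate makes `φ t` locally Lipschitz, so for a Lipschitz compactly supported test function `f` the
function `g = f ∘ φ t` is again Lipschitz and, by Rademacher, differentiable almost everywhere.
Differentiating `∫ g (φ s x) V x dx` at `s = 0` gives `∫ (∇g · F) V`, which equals
`-∫ g ∇·(F V)` on integrating by parts. Integrating in time and letting `f` decrease to the indicator
of `Z` yields the formula for `Z`. Positivity of the measure of `φ (-s) '' Z` follows from the
Lipschitz estimate through Hausdorff measure (`IsGlobalFlow.volume_preimage_pos`).
-/

open MeasureTheory Metric Filter

/-- The divergence of the vector field `fun y => ρ y • F y` at `x`: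
the trace of its Fréchet derivative. -/
noncomputable def divMul {n : ℕ}
    (F : EuclideanSpace ℝ (Fin n) → EuclideanSpace ℝ (Fin n))
    (ρ : EuclideanSpace ℝ (Fin n) → ℝ) (x : EuclideanSpace ℝ (Fin n)) : ℝ :=
  LinearMap.trace ℝ (EuclideanSpace ℝ (Fin n))
    (fderiv ℝ (fun y => ρ y • F y) x).toLinearMap

/-- `φ` is a global flow of the vector field `F`. -/
structure IsGlobalFlow {n : ℕ} (F : EuclideanSpace ℝ (Fin n) → EuclideanSpace ℝ (Fin n))
    (φ : ℝ → EuclideanSpace ℝ (Fin n) → EuclideanSpace ℝ (Fin n)) : Prop where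
  zero : ∀ x, φ 0 x = x
  add : ∀ s t x, φ (s + t) x = φ s (φ t x)
  deriv : ∀ t x, HasDerivAt (fun τ => φ τ x) (F (φ t x)) t

namespace IsGlobalFlow

variable {n : ℕ} {F : EuclideanSpace ℝ (Fin n) → EuclideanSpace ℝ (Fin n)}
  {φ : ℝ → EuclideanSpace ℝ (Fin n) → EuclideanSpace ℝ (Fin n)}

/-! ### Regularity of the flow in the initial condition -/

/-- The time-reversed flow, which reduces statements about negative times to positive ones. -/
lemma neg (h : IsGlobalFlow F φ) : IsGlobalFlow (fun x => -F x) (fun t => φ (-t)) where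
  zero x := by simpa using h.zero x
  add s t x := by rw [neg_add]; exact h.add _ _ _
  deriv t x := by
    have := (h.deriv (-t) x).scomp t (hasDerivAt_neg t)
    simpa [Function.comp_def] using this

lemma neg_apply (h : IsGlobalFlow F φ) (t : ℝ) (x : EuclideanSpace ℝ (Fin n)) :
    φ (-t) (φ t x) = x := by
  rw [← h.add, neg_add_cancel, h.zero]

lemma apply_neg (h : IsGlobalFlow F φ) (t : ℝ) (x : EuclideanSpace ℝ (Fin n)) :
    φ t (φ (-t) x) = x := by
  rw [← h.add, add_neg_cancel, h.zero]

lemma image_neg (h : IsGlobalFlow F φ) (t : ℝ) (Z : Set (EuclideanSpace ℝ (Fin n))) :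
    φ (-t) '' Z = φ t ⁻¹' Z :=
  congrFun (Set.image_eq_preimage_of_inverse (h.apply_neg t) (h.neg_apply t)) Z

lemma continuous_time (h : IsGlobalFlow F φ) (x : EuclideanSpace ℝ (Fin n)) :
    Continuous fun t => φ t x :=
  continuous_iff_continuousAt.2 fun t => (h.deriv t x).continuousAt

lemma exists_lipschitzOnWith_field (hF : ContDiff ℝ 1 F) (R : ℝ) :
    ∃ L, LipschitzOnWith L F (closedBall 0 R) :=
  (hF.locallyLipschitz.locallyLipschitzOn (s := closedBall 0 R)).exists_lipschitzOnWith_of_compact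
    (isCompact_closedBall 0 R)

/-- Trajectories starting close to `x₀` stay close to that of `x₀` on `[0, T]`. The barrier
`‖y - x₀‖ * exp ((L + 1) * t)` cannot be crossed while it is below `1`, because until then both
trajectories stay in a ball on which `F` is `L`-Lipschitz. -/
lemma norm_sub_le_of_nonneg (h : IsGlobalFlow F φ) (hF : ContDiff ℝ 1 F)
    (x₀ : EuclideanSpace ℝ (Fin n)) (T : ℝ) :
    ∃ C : ℝ, 0 < C ∧ ∀ y, C * ‖y - x₀‖ ≤ 1 → ∀ t ∈ Set.Icc 0 T,
      ‖φ t y - φ t x₀‖ ≤ C * ‖y - x₀‖ := by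
  obtain ⟨R, hR⟩ := ((isCompact_Icc (a := (0 : ℝ)) (b := T)).image
    (h.continuous_time x₀)).isBounded.subset_closedBall 0
  obtain ⟨L, hL⟩ := exists_lipschitzOnWith_field hF (R + 1)
  refine ⟨Real.exp ((L + 1) * T), Real.exp_pos _, fun y hy t ht => ?_⟩
  rcases eq_or_ne y x₀ with rfl | hne
  · simp
  have hpos : 0 < ‖y - x₀‖ := norm_pos_iff.2 (sub_ne_zero.2 hne)
  have hmono : ∀ s ≤ T, Real.exp ((L + 1) * s) * ‖y - x₀‖ ≤ Real.exp ((L + 1) * T) * ‖y - x₀‖ := by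
    intro s hs
    gcongr
  have key := image_norm_le_of_norm_deriv_right_lt_deriv_boundary
    (f := fun s => φ s y - φ s x₀) (f' := fun s => F (φ s y) - F (φ s x₀)) (a := 0) (b := T)
    (B := fun s => Real.exp ((L + 1) * s) * ‖y - x₀‖)
    (B' := fun s => (L + 1) * (Real.exp ((L + 1) * s) * ‖y - x₀‖))
    ((h.continuous_time y).sub (h.continuous_time x₀)).continuousOn
    (fun s _ => ((h.deriv s y).sub (h.deriv s x₀)).hasDerivWithinAt)
    (by simp [h.zero])
    (fun s => by
      have := (((hasDerivAt_id s).const_mul ((L : ℝ) + 1)).exp).mul_const ‖y - x₀‖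
      refine this.congr_deriv ?_
      simp
      ring)
    (fun s hs hB => by
      have h1 : φ s x₀ ∈ closedBall (0 : EuclideanSpace ℝ (Fin n)) R :=
        hR ⟨s, ⟨hs.1, hs.2.le⟩, rfl⟩
      have h2 : ‖φ s y - φ s x₀‖ ≤ 1 := hB.trans_le ((hmono s hs.2.le).trans hy)
      have h3 : φ s y ∈ closedBall (0 : EuclideanSpace ℝ (Fin n)) (R + 1) := by
        rw [mem_closedBall_zero_iff] at h1 ⊢
        calc ‖φ s y‖ = ‖φ s x₀ + (φ s y - φ s x₀)‖ := by simp
          _ ≤ R + 1 := (norm_add_le _ _).trans (add_le_add h1 h2)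
      have h4 : φ s x₀ ∈ closedBall (0 : EuclideanSpace ℝ (Fin n)) (R + 1) :=
        closedBall_subset_closedBall (by linarith) h1
      have h5 := hL.norm_sub_le h3 h4
      rw [hB] at h5
      have h6 : 0 < Real.exp ((L + 1) * s) * ‖y - x₀‖ := by positivity
      linarith)
  exact (key ht).trans (hmono t ht.2)

/-- A flow is jointly continuous in time and initial condition. -/
lemma continuous_uncurry (h : IsGlobalFlow F φ) (hF : ContDiff ℝ 1 F) :
    Continuous fun p : ℝ × EuclideanSpace ℝ (Fin n) => φ p.1 p.2 := by
  rw [continuous_iff_continuousAt]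
  rintro ⟨t₀, x₀⟩
  obtain ⟨C₁, hC₁, h₁⟩ := h.norm_sub_le_of_nonneg hF x₀ (|t₀| + 1)
  obtain ⟨C₂, hC₂, h₂⟩ := h.neg.norm_sub_le_of_nonneg hF.neg x₀ (|t₀| + 1)
  have hsmall : Tendsto (fun p : ℝ × EuclideanSpace ℝ (Fin n) => (C₁ + C₂) * ‖p.2 - x₀‖)
      (nhds (t₀, x₀)) (nhds 0) :=
    Continuous.tendsto' (by fun_prop) _ _ (by simp)
  have htime : Tendsto (fun p : ℝ × EuclideanSpace ℝ (Fin n) => ‖φ p.1 x₀ - φ t₀ x₀‖)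
      (nhds (t₀, x₀)) (nhds 0) := by
    have := h.continuous_time x₀
    exact Continuous.tendsto' (by fun_prop) _ _ (by simp)
  rw [ContinuousAt, tendsto_iff_norm_sub_tendsto_zero]
  refine squeeze_zero' (.of_forall fun _ => norm_nonneg _) ?_ (by simpa using hsmall.add htime)
  have hnear : ∀ᶠ p : ℝ × EuclideanSpace ℝ (Fin n) in nhds (t₀, x₀), |p.1| < |t₀| + 1 :=
    (continuous_fst.abs.tendsto' (t₀, x₀) |t₀| rfl).eventually_lt_const (by linarith)
  filter_upwards [hsmall.eventually_le_const one_pos, hnear] with p hp hpt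
  have hb : ‖φ p.1 p.2 - φ p.1 x₀‖ ≤ (C₁ + C₂) * ‖p.2 - x₀‖ := by
    have hn := norm_nonneg (p.2 - x₀)
    rcases le_total 0 p.1 with ht | ht
    · have := h₁ p.2 (by nlinarith) p.1 ⟨ht, (le_abs_self _).trans hpt.le⟩
      nlinarith
    · have := h₂ p.2 (by nlinarith) (-p.1) ⟨by linarith, (neg_le_abs _).trans hpt.le⟩
      rw [neg_neg] at this
      nlinarith
  calc ‖φ p.1 p.2 - φ t₀ x₀‖ = ‖(φ p.1 p.2 - φ p.1 x₀) + (φ p.1 x₀ - φ t₀ x₀)‖ := by simp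
    _ ≤ _ := (norm_add_le _ _).trans (by gcongr)

lemma continuous_apply (h : IsGlobalFlow F φ) (hF : ContDiff ℝ 1 F) (t : ℝ) :
    Continuous (φ t) :=
  (h.continuous_uncurry hF).comp (Continuous.prodMk_right t)

lemma isCompact_image_prod (h : IsGlobalFlow F φ) (hF : ContDiff ℝ 1 F) (a b : ℝ)
    {K : Set (EuclideanSpace ℝ (Fin n))} (hK : IsCompact K) :
    IsCompact ((fun p : ℝ × EuclideanSpace ℝ (Fin n) => φ p.1 p.2) '' (Set.Icc a b ×ˢ K)) :=
  (isCompact_Icc.prod hK).image (h.continuous_uncurry hF)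

lemma exists_lipschitzOnWith_of_nonneg (h : IsGlobalFlow F φ) (hF : ContDiff ℝ 1 F)
    {K : Set (EuclideanSpace ℝ (Fin n))} (hK : IsCompact K) {t : ℝ} (ht : 0 ≤ t) :
    ∃ C, LipschitzOnWith C (φ t) K := by
  obtain ⟨R, hR⟩ := (h.isCompact_image_prod hF 0 t hK).isBounded.subset_closedBall 0
  obtain ⟨L, hL⟩ := exists_lipschitzOnWith_field hF R
  refine ⟨Real.toNNReal (Real.exp (L * t)), LipschitzOnWith.of_dist_le_mul fun x hx y hy => ?_⟩
  have := dist_le_of_trajectories_ODE_of_mem (v := fun _ => F) (s := fun _ => closedBall 0 R)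
    (f := fun s => φ s x) (g := fun s => φ s y) (a := 0) (b := t) (δ := dist x y)
    (fun _ _ => hL) (h.continuous_time x).continuousOn (fun s _ => (h.deriv s x).hasDerivWithinAt)
    (fun s hs => hR ⟨(s, x), ⟨⟨hs.1, hs.2.le⟩, hx⟩, rfl⟩)
    (h.continuous_time y).continuousOn (fun s _ => (h.deriv s y).hasDerivWithinAt)
    (fun s hs => hR ⟨(s, y), ⟨⟨hs.1, hs.2.le⟩, hy⟩, rfl⟩)
    (by simp [h.zero]) t ⟨ht, le_rfl⟩
  rw [Real.coe_toNNReal _ (Real.exp_pos _).le, mul_comm]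
  simpa using this

lemma exists_lipschitzOnWith (h : IsGlobalFlow F φ) (hF : ContDiff ℝ 1 F)
    {K : Set (EuclideanSpace ℝ (Fin n))} (hK : IsCompact K) (t : ℝ) :
    ∃ C, LipschitzOnWith C (φ t) K := by
  rcases le_total 0 t with ht | ht
  · exact h.exists_lipschitzOnWith_of_nonneg hF hK ht
  · simpa using h.neg.exists_lipschitzOnWith_of_nonneg hF.neg hK (neg_nonneg.2 ht)

lemma locallyLipschitz (h : IsGlobalFlow F φ) (hF : ContDiff ℝ 1 F) (t : ℝ) :
    LocallyLipschitz (φ t) := fun x =>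
  let ⟨C, hC⟩ := h.exists_lipschitzOnWith hF (isCompact_closedBall x 1) t
  ⟨C, _, closedBall_mem_nhds x one_pos, hC⟩

/-- Preimages of sets of positive measure under the flow have positive measure: `φ t` is locally
Lipschitz, hence maps bounded null sets to null sets. -/
lemma volume_preimage_pos (h : IsGlobalFlow F φ) (hF : ContDiff ℝ 1 F) (t : ℝ)
    {Z : Set (EuclideanSpace ℝ (Fin n))} (hZ : IsCompact Z) (hZ0 : 0 < volume Z) :
    0 < volume (φ t ⁻¹' Z) := by
  rw [pos_iff_ne_zero]
  intro h0
  have hcomp : IsCompact (φ t ⁻¹' Z) := by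
    rw [← h.image_neg]
    exact hZ.image (h.continuous_apply hF _)
  obtain ⟨C, hC⟩ := h.exists_lipschitzOnWith hF hcomp t
  have hd : (0 : ℝ) ≤ (Module.finrank ℝ (EuclideanSpace ℝ (Fin n)) : ℝ) := by positivity
  have hle := hC.hausdorffMeasure_image_le hd
  have hsurj : φ t '' (φ t ⁻¹' Z) = Z :=
    Set.image_preimage_eq _ fun x => ⟨_, h.apply_neg t x⟩
  have hac : (Measure.hausdorffMeasure (Module.finrank ℝ (EuclideanSpace ℝ (Fin n)) : ℝ) :
      Measure (EuclideanSpace ℝ (Fin n))) ≪ volume :=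
    Measure.absolutelyContinuous_isAddHaarMeasure _ _
  have hac' : (volume : Measure (EuclideanSpace ℝ (Fin n))) ≪
      Measure.hausdorffMeasure (Module.finrank ℝ (EuclideanSpace ℝ (Fin n)) : ℝ) :=
    Measure.absolutelyContinuous_isAddHaarMeasure _ _
  rw [hsurj, hac h0, mul_zero] at hle
  exact hZ0.ne' (hac' (le_antisymm hle bot_le))

end IsGlobalFlow

/-! ### Transport of a compactly supported density -/

section Transport

variable {n : ℕ} {F : EuclideanSpace ℝ (Fin n) → EuclideanSpace ℝ (Fin n)}
  {φ : ℝ → EuclideanSpace ℝ (Fin n) → EuclideanSpace ℝ (Fin n)}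

lemma exists_lipschitzWith_of_hasCompactSupport {g : EuclideanSpace ℝ (Fin n) → ℝ}
    (hg : LocallyLipschitz g) (hgc : HasCompactSupport g) : ∃ C, LipschitzWith C g := by
  have hcK : IsCompact (cthickening 1 (tsupport g)) := IsCompact.cthickening hgc
  obtain ⟨C, hC⟩ := (hg.locallyLipschitzOn
    (s := cthickening 1 (tsupport g))).exists_lipschitzOnWith_of_compact hcK
  obtain ⟨M, hM⟩ := hgc.exists_bound_of_continuous hg.continuous
  have hM0 : 0 ≤ M := (norm_nonneg _).trans (hM 0)
  have hsub := self_subset_cthickening (δ := 1) (tsupport g)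
  -- Points of the support at distance more than `1` are handled by the bound `M` on `|g|`.
  have key : ∀ x y, x ∈ tsupport g → dist (g x) (g y) ≤ (C + M) * dist x y := by
    intro x y hx
    by_cases hy : y ∈ cthickening 1 (tsupport g)
    · have := hC.dist_le_mul x (hsub hx) y hy
      nlinarith [dist_nonneg (x := x) (y := y)]
    · have h0 : g y = 0 := image_eq_zero_of_notMem_tsupport fun h' => hy (hsub h')
      have h1 : 1 < dist x y := by
        by_contra! hle
        exact hy (mem_cthickening_of_dist_le y x 1 _ hx (by rwa [dist_comm]))
      rw [h0, dist_zero_right]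
      nlinarith [hM x, C.coe_nonneg]
  refine ⟨Real.toNNReal (C + M), LipschitzWith.of_dist_le_mul fun x y => ?_⟩
  rw [Real.coe_toNNReal _ (by positivity)]
  by_cases hx : x ∈ tsupport g
  · exact key x y hx
  by_cases hy : y ∈ tsupport g
  · rw [dist_comm (g x), dist_comm x]
    exact key y x hy
  · rw [image_eq_zero_of_notMem_tsupport hx, image_eq_zero_of_notMem_tsupport hy, dist_self]
    positivity

lemma divMul_eq_sum {V : EuclideanSpace ℝ (Fin n) → ℝ} {x : EuclideanSpace ℝ (Fin n)}
    (h : DifferentiableAt ℝ (fun y => V y • F y) x) :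
    divMul F V x = ∑ i, fderiv ℝ (fun y => V y * F y i) x (EuclideanSpace.single i 1) := by
  rw [divMul, LinearMap.trace_eq_sum_inner _ (EuclideanSpace.basisFun (Fin n) ℝ)]
  refine Finset.sum_congr rfl fun i _ => ?_
  have hi := ((EuclideanSpace.proj (𝕜 := ℝ) i).hasFDerivAt.comp x h.hasFDerivAt).fderiv
  have he : (fun y => V y * F y i) =
      (EuclideanSpace.proj (𝕜 := ℝ) i : EuclideanSpace ℝ (Fin n) →L[ℝ] ℝ) ∘
        fun y => V y • F y := by
    ext y
    simp
  rw [he, hi]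
  simp [EuclideanSpace.inner_single_left]

lemma contDiff_mul_apply (hF : ContDiff ℝ 1 F) {V : EuclideanSpace ℝ (Fin n) → ℝ}
    (hV : ContDiff ℝ 1 V) (i : Fin n) : ContDiff ℝ 1 fun y => V y * F y i := by
  fun_prop

lemma continuous_divMul (hF : ContDiff ℝ 1 F) {V : EuclideanSpace ℝ (Fin n) → ℝ}
    (hV : ContDiff ℝ 1 V) : Continuous (divMul F V) := by
  have : divMul F V = fun x =>
      ∑ i, fderiv ℝ (fun y => V y * F y i) x (EuclideanSpace.single i 1) :=
    funext fun x => divMul_eq_sum ((hV.smul hF).differentiable one_ne_zero x)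
  rw [this]
  exact continuous_finsetSum _ fun i _ =>
    ((contDiff_mul_apply hF hV i).continuous_fderiv one_ne_zero).clm_apply continuous_const

lemma hasCompactSupport_divMul (F : EuclideanSpace ℝ (Fin n) → EuclideanSpace ℝ (Fin n))
    {V : EuclideanSpace ℝ (Fin n) → ℝ} (hV : HasCompactSupport V) :
    HasCompactSupport (divMul F V) := by
  have h : HasCompactSupport fun y => V y • F y := hV.smul_right
  exact (h.fderiv ℝ).comp_left (g := fun L : EuclideanSpace ℝ (Fin n) →L[ℝ] _ =>
    LinearMap.trace ℝ (EuclideanSpace ℝ (Fin n)) L.toLinearMap) (by simp)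

/-- Integration by parts against a Lipschitz function `g`; the left-hand integrand is
`V * (∇g · F)`, which makes sense almost everywhere by Rademacher's theorem. -/
lemma integral_sum_lineDeriv_mul (hF : ContDiff ℝ 1 F) {g V : EuclideanSpace ℝ (Fin n) → ℝ}
    {C : NNReal} (hg : LipschitzWith C g) (hV : ContDiff ℝ 1 V) (hVc : HasCompactSupport V) :
    ∫ x, ∑ i, lineDeriv ℝ g x (EuclideanSpace.single i 1) * (V x * F x i) =
      -∫ x, g x * divMul F V x := by
  have hWc : ∀ i, HasCompactSupport fun y => V y * F y i := fun i => hVc.mul_right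
  have hW : ∀ i, ContDiff ℝ 1 fun y => V y * F y i := contDiff_mul_apply hF hV
  have hint : ∀ i, Integrable fun x =>
      fderiv ℝ (fun y => V y * F y i) x (EuclideanSpace.single i 1) * g x := fun i =>
    ((((hW i).continuous_fderiv one_ne_zero).clm_apply continuous_const).mul
      hg.continuous).integrable_of_hasCompactSupport
      (((hWc i).fderiv_apply ℝ _).mul_right)
  have hparts : ∀ i, ∫ x, lineDeriv ℝ g x (EuclideanSpace.single i 1) * (V x * F x i) =
      -∫ x, fderiv ℝ (fun y => V y * F y i) x (EuclideanSpace.single i 1) * g x := by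
    intro i
    obtain ⟨D, hD⟩ := (hW i).lipschitzWith_of_hasCompactSupport (hWc i) one_ne_zero
    rw [hg.integral_lineDeriv_mul_eq hD (hWc i), ← integral_neg]
    refine integral_congr_ae (.of_forall fun x => ?_)
    dsimp only
    rw [((hW i).differentiable one_ne_zero x).lineDeriv_eq_fderiv, map_neg, neg_mul]
  rw [integral_finsetSum]
  · rw [Finset.sum_congr rfl fun i _ => hparts i, Finset.sum_neg_distrib,
      ← integral_finsetSum _ fun i _ => hint i]
    congr 1
    refine integral_congr_ae (.of_forall fun x => ?_)
    dsimp only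
    rw [divMul_eq_sum ((hV.smul hF).differentiable one_ne_zero x), ← Finset.sum_mul, mul_comm]
  · intro i _
    have hWi : Integrable fun x => V x * F x i :=
      (hW i).continuous.integrable_of_hasCompactSupport (hWc i)
    exact hWi.bdd_mul (c := C * ‖(EuclideanSpace.single i 1 : EuclideanSpace ℝ (Fin n))‖)
      (measurable_lineDeriv hg.continuous).aestronglyMeasurable
      (.of_forall fun x => norm_lineDeriv_le_of_lipschitz ℝ hg)

/-- Differentiation under the integral sign at time `0`. -/
lemma hasDerivAt_integral_flow_zero (h : IsGlobalFlow F φ) (hF : ContDiff ℝ 1 F)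
    {g V : EuclideanSpace ℝ (Fin n) → ℝ} {C : NNReal} (hg : LipschitzWith C g)
    (hV : ContDiff ℝ 1 V) (hVc : HasCompactSupport V) :
    HasDerivAt (fun s => ∫ x, g (φ s x) * V x) (-∫ x, g x * divMul F V x) 0 := by
  obtain ⟨M, hM⟩ := ((h.isCompact_image_prod hF (-1) 1 hVc).image
    hF.continuous).isBounded.exists_norm_le
  have hM' : ∀ s ∈ ball (0 : ℝ) 1, ∀ x ∈ tsupport V, ‖F (φ s x)‖ ≤ M := by
    intro s hs x hx
    rw [mem_ball_zero_iff, Real.norm_eq_abs, abs_lt] at hs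
    exact hM _ ⟨_, ⟨(s, x), ⟨⟨hs.1.le, hs.2.le⟩, hx⟩, rfl⟩, rfl⟩
  have hcont : ∀ s, Continuous fun x => g (φ s x) * V x := fun s =>
    (hg.continuous.comp (h.continuous_apply hF s)).mul hV.continuous
  rw [← integral_sum_lineDeriv_mul hF hg hV hVc]
  refine (hasDerivAt_integral_of_dominated_loc_of_lip (μ := volume)
    (F := fun s x => g (φ s x) * V x) (s := ball 0 1)
    (bound := fun x => C * M * V x) (ball_mem_nhds 0 one_pos)
    (.of_forall fun s => (hcont s).aestronglyMeasurable)
    ((hcont 0).integrable_of_hasCompactSupport hVc.mul_left) ?_ ?_ ?_ ?_).2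
  · refine Measurable.aestronglyMeasurable (Finset.measurable_fun_sum _ fun i _ => ?_)
    exact (measurable_lineDeriv hg.continuous).mul
      (contDiff_mul_apply hF hV i).continuous.measurable
  · refine .of_forall fun x => ?_
    by_cases hx : x ∈ tsupport V
    · have hM0 : 0 ≤ M := (norm_nonneg _).trans (hM' 0 (mem_ball_self one_pos) x hx)
      have hlip : LipschitzOnWith M.toNNReal (fun s => φ s x) (ball 0 1) :=
        (convex_ball (0 : ℝ) 1).lipschitzOnWith_of_nnnorm_hasDerivWithin_le
          (fun s _ => (h.deriv s x).hasDerivWithinAt) fun s hs => by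
            rw [← NNReal.coe_le_coe, coe_nnnorm, Real.coe_toNNReal _ hM0]
            exact hM' s hs x hx
      refine LipschitzOnWith.of_dist_le_mul fun s hs t ht => ?_
      have h1 := (hg.dist_le_mul (φ s x) (φ t x)).trans
        (mul_le_mul_of_nonneg_left (hlip.dist_le_mul s hs t ht) C.coe_nonneg)
      rw [Real.coe_toNNReal _ hM0] at h1
      rw [Real.dist_eq, ← sub_mul, abs_mul, ← Real.dist_eq, Real.coe_nnabs, abs_mul,
        abs_of_nonneg (mul_nonneg C.coe_nonneg hM0)]
      nlinarith [abs_nonneg (V x)]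
    · simp only [image_eq_zero_of_notMem_tsupport hx, mul_zero]
      exact (LipschitzWith.const' (0 : ℝ)).lipschitzOnWith
  · exact (hV.continuous.integrable_of_hasCompactSupport hVc).const_mul _
  · filter_upwards [hg.ae_differentiableAt] with x hx
    have h0 : HasDerivAt (fun s => φ s x) (F x) 0 := by simpa [h.zero] using h.deriv 0 x
    have hx' : HasFDerivAt g (fderiv ℝ g x) (φ 0 x) := by rw [h.zero]; exact hx.hasFDerivAt
    refine ((hx'.comp_hasDerivAt 0 h0).mul_const (V x)).congr_deriv ?_
    have hsum : F x = ∑ i, F x i • (EuclideanSpace.single i 1 : EuclideanSpace ℝ (Fin n)) := by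
      simpa using ((EuclideanSpace.basisFun (Fin n) ℝ).sum_repr (F x)).symm
    conv_lhs => rw [hsum]
    rw [map_sum, Finset.sum_mul]
    refine Finset.sum_congr rfl fun i _ => ?_
    rw [map_smul, hx.lineDeriv_eq_fderiv, smul_eq_mul]
    ring

lemma hasDerivAt_integral_flow (h : IsGlobalFlow F φ) (hF : ContDiff ℝ 1 F)
    {f V : EuclideanSpace ℝ (Fin n) → ℝ} {C : NNReal} (hf : LipschitzWith C f)
    (hfc : HasCompactSupport f) (hV : ContDiff ℝ 1 V) (hVc : HasCompactSupport V) (t : ℝ) :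
    HasDerivAt (fun s => ∫ x, f (φ s x) * V x) (-∫ x, f (φ t x) * divMul F V x) t := by
  have hgl : LocallyLipschitz fun x => f (φ t x) :=
    hf.locallyLipschitz.comp (h.locallyLipschitz hF t)
  have hgc : HasCompactSupport fun x => f (φ t x) := by
    refine HasCompactSupport.intro (K := φ (-t) '' tsupport f)
      (hfc.image (h.continuous_apply hF _)) fun x hx => ?_
    rw [h.image_neg] at hx
    exact image_eq_zero_of_notMem_tsupport hx
  obtain ⟨D, hD⟩ := exists_lipschitzWith_of_hasCompactSupport hgl hgc
  have h0 := hasDerivAt_integral_flow_zero h hF hD hV hVc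
  have h1 := HasDerivAt.comp_sub_const (f := fun s => ∫ x, f (φ t (φ s x)) * V x) t t
    (by simpa using h0)
  simpa [← h.add] using h1

lemma integral_flow_sub (h : IsGlobalFlow F φ) (hF : ContDiff ℝ 1 F)
    {f V : EuclideanSpace ℝ (Fin n) → ℝ} {C : NNReal} (hf : LipschitzWith C f)
    (hfc : HasCompactSupport f) (hV : ContDiff ℝ 1 V) (hVc : HasCompactSupport V) (τ : ℝ) :
    Continuous (fun s => ∫ x, f (φ s x) * divMul F V x) ∧
    ∫ s in (0 : ℝ)..τ, ∫ x, f (φ s x) * divMul F V x =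
      (∫ x, f x * V x) - ∫ x, f (φ τ x) * V x := by
  have hcont : Continuous fun s => ∫ x, f (φ s x) * divMul F V x := by
    have hcs := hasCompactSupport_divMul F hVc
    have := continuous_parametric_integral_of_continuous (μ := volume)
      (f := fun s x => f (φ s x) * divMul F V x)
      ((hf.continuous.comp (h.continuous_uncurry hF)).mul
        ((continuous_divMul hF hV).comp continuous_snd)) hcs
    refine this.congr fun s => setIntegral_eq_integral_of_forall_compl_eq_zero fun x hx => ?_
    rw [image_eq_zero_of_notMem_tsupport hx, mul_zero]
  refine ⟨hcont, ?_⟩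
  have := intervalIntegral.integral_eq_sub_of_hasDerivAt
    (fun s _ => hasDerivAt_integral_flow h hF hf hfc hV hVc s)
    (hcont.neg.intervalIntegrable 0 τ)
  rw [intervalIntegral.integral_neg] at this
  simp only [h.zero] at this
  linarith

/-- The transport formula `∫_Z V - ∫_{φ τ ⁻¹ Z} V = ∫₀^τ ∫_{φ s ⁻¹ Z} ∇·(F V) dx ds` for compact
`Z`, obtained from the Lipschitz case by letting the test functions decrease to the indicator
of `Z`. -/
lemma setIntegral_flow_sub (h : IsGlobalFlow F φ) (hF : ContDiff ℝ 1 F)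
    {V : EuclideanSpace ℝ (Fin n) → ℝ} (hV : ContDiff ℝ 1 V) (hVc : HasCompactSupport V)
    {Z : Set (EuclideanSpace ℝ (Fin n))} (hZ : IsCompact Z) (τ : ℝ) :
    IntervalIntegrable (fun s => ∫ x in φ s ⁻¹' Z, divMul F V x) volume 0 τ ∧
    ∫ s in (0 : ℝ)..τ, ∫ x in φ s ⁻¹' Z, divMul F V x =
      (∫ x in Z, V x) - ∫ x in φ τ ⁻¹' Z, V x := by
  obtain ⟨δ, -, hδpos, hδlim⟩ := exists_seq_strictAnti_tendsto (0 : ℝ)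
  let f : ℕ → EuclideanSpace ℝ (Fin n) → ℝ := fun k x => (thickenedIndicator (hδpos k) Z x : ℝ)
  have hfl : ∀ k, LipschitzWith (δ k).toNNReal⁻¹ (f k) := fun k =>
    lipschitzWith_thickenedIndicator (hδpos k) Z
  have hfc : ∀ k, HasCompactSupport (f k) := fun k => by
    refine HasCompactSupport.intro (K := cthickening (δ k) Z) hZ.cthickening fun x hx => ?_
    have := thickenedIndicator_zero (hδpos k) Z
      fun hx' => hx (thickening_subset_cthickening _ _ hx')
    exact (congrArg NNReal.toReal this).trans NNReal.coe_zero
  have hf1 : ∀ k x, ‖f k x‖ ≤ 1 := fun k x => by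
    rw [Real.norm_of_nonneg (NNReal.coe_nonneg _)]
    exact_mod_cast thickenedIndicator_le_one (hδpos k) Z x
  have hflim : ∀ x, Tendsto (fun k => f k x) atTop (nhds (Z.indicator 1 x)) := by
    intro x
    have := tendsto_pi_nhds.1 (thickenedIndicator_tendsto_indicator_closure hδpos hδlim Z) x
    rw [hZ.isClosed.closure_eq] at this
    have hval : ((Z.indicator (fun _ => 1) x : NNReal) : ℝ) = Z.indicator 1 x := by
      by_cases hx : x ∈ Z <;> simp [hx]
    rw [← hval]
    exact (NNReal.continuous_coe.tendsto _).comp this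
  have hlim : ∀ {U : EuclideanSpace ℝ (Fin n) → ℝ}, Continuous U → HasCompactSupport U → ∀ s,
      Tendsto (fun k => ∫ x, f k (φ s x) * U x) atTop (nhds (∫ x in φ s ⁻¹' Z, U x)) := by
    intro U hU hUc s
    rw [← integral_indicator (hZ.isClosed.preimage (h.continuous_apply hF s)).measurableSet]
    refine tendsto_integral_of_dominated_convergence (fun x => ‖U x‖)
      (fun k => (((hfl k).continuous.comp (h.continuous_apply hF s)).mul hU).aestronglyMeasurable)
      (hU.integrable_of_hasCompactSupport hUc).norm
      (fun k => .of_forall fun x => ?_) (.of_forall fun x => ?_)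
    · rw [norm_mul]
      exact mul_le_of_le_one_left (norm_nonneg _) (hf1 k _)
    · convert (hflim (φ s x)).mul_const (U x) using 2
      by_cases hx : φ s x ∈ Z <;> simp [Set.indicator, hx]
  have hDc := continuous_divMul hF hV
  have hDs := hasCompactSupport_divMul F hVc
  have hDi := hDc.integrable_of_hasCompactSupport hDs (μ := volume)
  have hmlim := hlim hDc hDs
  have hbound : ∀ k s, ‖∫ x, f k (φ s x) * divMul F V x‖ ≤ ∫ x, ‖divMul F V x‖ := fun k s => by
    refine norm_integral_le_of_norm_le hDi.norm (.of_forall fun x => ?_)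
    rw [norm_mul]
    exact mul_le_of_le_one_left (norm_nonneg _) (hf1 k _)
  have hformula := fun k => integral_flow_sub h hF (hfl k) (hfc k) hV hVc τ
  refine ⟨?_, ?_⟩
  · have hmeas : StronglyMeasurable fun s => ∫ x in φ s ⁻¹' Z, divMul F V x :=
      stronglyMeasurable_of_tendsto atTop (fun k => (hformula k).1.stronglyMeasurable)
        (tendsto_pi_nhds.2 hmlim)
    refine (intervalIntegrable_const (c := ∫ x, ‖divMul F V x‖)).mono_fun
      hmeas.aestronglyMeasurable (.of_forall fun s => ?_)
    refine (le_of_tendsto (hmlim s).norm (.of_forall fun k => hbound k s)).trans (le_abs_self _)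
  · have h1 : Tendsto (fun k => ∫ s in (0 : ℝ)..τ, ∫ x, f k (φ s x) * divMul F V x) atTop
        (nhds (∫ s in (0 : ℝ)..τ, ∫ x in φ s ⁻¹' Z, divMul F V x)) :=
      intervalIntegral.tendsto_integral_filter_of_dominated_convergence
        (fun _ => ∫ x, ‖divMul F V x‖)
        (.of_forall fun k => (hformula k).1.aestronglyMeasurable)
        (.of_forall fun k => .of_forall fun s _ => hbound k s)
        intervalIntegrable_const (.of_forall fun s _ => hmlim s)
    have h2 := (hlim hV.continuous hVc 0).sub (hlim hV.continuous hVc τ)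
    have hid : φ 0 ⁻¹' Z = Z := by ext x; simp [h.zero]
    rw [hid] at h2
    refine tendsto_nhds_unique h1 (h2.congr fun k => ?_)
    rw [(hformula k).2]
    simp only [h.zero]

end Transport

/-! ### Localization away from the invariant set -/

/-- A function that is `C¹` off a closed set `A` agrees near any compact set disjoint from `A` with
a compactly supported `C¹` function. -/
lemma exists_contDiff_eqOn_nhds {n : ℕ} {A K : Set (EuclideanSpace ℝ (Fin n))}
    (hA : IsClosed A) (hK : IsCompact K) (hKA : K ⊆ Aᶜ) {ρ : EuclideanSpace ℝ (Fin n) → ℝ}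
    (hρ : ContDiffOn ℝ 1 ρ Aᶜ) :
    ∃ V : EuclideanSpace ℝ (Fin n) → ℝ, ContDiff ℝ 1 V ∧ HasCompactSupport V ∧
      ∀ x ∈ K, V =ᶠ[nhds x] ρ := by
  obtain ⟨K₁, hK₁, hKK₁, hK₁A⟩ := exists_compact_between hK hA.isOpen_compl hKA
  obtain ⟨K₂, hK₂, hK₁K₂, hK₂A⟩ := exists_compact_between hK₁ hA.isOpen_compl hK₁A
  obtain ⟨χ, hχ, -, hsupp, hone⟩ := exists_contMDiff_support_eq_eq_one_iff
    (modelWithCornersSelf ℝ (EuclideanSpace ℝ (Fin n))) isOpen_interior hK₁.isClosed hK₁K₂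
  have hχ1 : ContDiff ℝ 1 χ := hχ.contDiff.of_le (by exact_mod_cast le_top)
  have hts : tsupport χ ⊆ K₂ := closure_minimal (hsupp ▸ interior_subset) hK₂.isClosed
  have hχc : HasCompactSupport χ := hK₂.of_isClosed_subset (isClosed_tsupport χ) hts
  refine ⟨fun x => χ x * ρ x, ?_, hχc.mul_right, fun x hx => ?_⟩
  · rw [contDiff_iff_contDiffAt]
    intro x
    by_cases hx : x ∈ A
    · have h0 : χ =ᶠ[nhds x] 0 :=
        notMem_tsupport_iff_eventuallyEq.1 fun h' => hK₂A (hts h') hx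
      refine (contDiffAt_const (c := (0 : ℝ))).congr_of_eventuallyEq ?_
      filter_upwards [h0] with y hy
      simp [hy]
    · exact hχ1.contDiffAt.mul (hρ.contDiffAt (hA.isOpen_compl.mem_nhds hx))
  · filter_upwards [mem_interior_iff_mem_nhds.1 (hKK₁ hx)] with y hy
    rw [(hone y).1 hy, one_mul]

lemma divMul_congr {n : ℕ} (F : EuclideanSpace ℝ (Fin n) → EuclideanSpace ℝ (Fin n))
    {V ρ : EuclideanSpace ℝ (Fin n) → ℝ} {x : EuclideanSpace ℝ (Fin n)}
    (h : V =ᶠ[nhds x] ρ) : divMul F V x = divMul F ρ x := by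
  have : (fun y => V y • F y) =ᶠ[nhds x] fun y => ρ y • F y := by
    filter_upwards [h] with y hy
    rw [hy]
  rw [divMul, divMul, this.fderiv_eq]

theorem continuous_lyapunov_density_gives_discrete {n : ℕ}
    (F : EuclideanSpace ℝ (Fin n) → EuclideanSpace ℝ (Fin n))
    (hF : ContDiff ℝ 1 F)
    (φ : ℝ → EuclideanSpace ℝ (Fin n) → EuclideanSpace ℝ (Fin n))
    (hφ0 : ∀ x, φ 0 x = x)
    (hφadd : ∀ s t x, φ (s + t) x = φ s (φ t x))
    (hφderiv : ∀ t x, HasDerivAt (fun τ => φ τ x) (F (φ t x)) t)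
    (A : Set (EuclideanSpace ℝ (Fin n)))
    (hA : IsCompact A)
    (hAinv : ∀ t, φ t '' A = A)
    (ρ : EuclideanSpace ℝ (Fin n) → ℝ)
    (hρC1 : ContDiffOn ℝ 1 ρ Aᶜ)
    (hCLD1 : ∀ᵐ x ∂volume, x ∈ Aᶜ → 0 < ρ x)
    (hCLD2 : ∀ ε > 0, IntegrableOn ρ {x | ε ≤ infDist x A} volume)
    (hCLD3 : ∀ᵐ x ∂volume, x ∈ Aᶜ → 0 < divMul F ρ x) :
    ∀ τ > (0 : ℝ), ∀ ε > (0 : ℝ),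
      ∀ Z : Set (EuclideanSpace ℝ (Fin n)), IsCompact Z → 0 < volume Z →
        Z ⊆ {x | ε ≤ infDist x A} →
        (∫ x in φ (-τ) '' Z, ρ x) < ∫ x in Z, ρ x := by
  intro τ hτ ε hε Z hZ hZ0 hZA
  have h : IsGlobalFlow F φ := ⟨hφ0, hφadd, hφderiv⟩
  let K := (fun p : ℝ × EuclideanSpace ℝ (Fin n) => φ p.1 p.2) '' (Set.Icc (-τ) 0 ×ˢ Z)
  have hK : IsCompact K := h.isCompact_image_prod hF (-τ) 0 hZ
  have hpre : ∀ s ∈ Set.Icc 0 τ, φ s ⁻¹' Z ⊆ K := fun s hs x hx =>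
    ⟨(-s, φ s x), ⟨⟨neg_le_neg hs.2, neg_nonpos.2 hs.1⟩, hx⟩, h.neg_apply s x⟩
  have hKA : K ⊆ Aᶜ := by
    rintro _ ⟨⟨s, z⟩, ⟨-, hz⟩, rfl⟩ hmem
    have hzA : z ∈ A := by
      rw [← hAinv (-s)]
      exact ⟨φ s z, hmem, h.neg_apply s z⟩
    have := hZA hz
    rw [Set.mem_ofPred_eq, infDist_zero_of_mem hzA] at this
    exact this.not_gt hε
  obtain ⟨V, hV, hVc, hVρ⟩ := exists_contDiff_eqOn_nhds hA.isClosed hK hKA hρC1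
  obtain ⟨hint, hformula⟩ := setIntegral_flow_sub h hF hV hVc hZ τ
  have hmeas : ∀ s, MeasurableSet (φ s ⁻¹' Z) := fun s =>
    (hZ.isClosed.preimage (h.continuous_apply hF s)).measurableSet
  have hVint : ∀ s ∈ Set.Icc 0 τ, ∫ x in φ s ⁻¹' Z, V x = ∫ x in φ s ⁻¹' Z, ρ x := fun s hs =>
    setIntegral_congr_fun (hmeas s) fun x hx => (hVρ x (hpre s hs hx)).eq_of_nhds
  have hpos : 0 < ∫ s in (0 : ℝ)..τ, ∫ x in φ s ⁻¹' Z, divMul F V x := by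
    refine intervalIntegral.intervalIntegral_pos_of_pos_on hint (fun s hs => ?_) hτ
    have hsub := hpre s ⟨hs.1.le, hs.2.le⟩
    have hdiv : ∀ᵐ x ∂volume.restrict (φ s ⁻¹' Z), 0 < divMul F V x := by
      rw [ae_restrict_iff' (hmeas s)]
      filter_upwards [hCLD3] with x hx hxZ
      rw [divMul_congr F (hVρ x (hsub hxZ))]
      exact hx (hKA (hsub hxZ))
    have hDi : IntegrableOn (divMul F V) (φ s ⁻¹' Z) :=
      ((continuous_divMul hF hV).integrable_of_hasCompactSupport
        (hasCompactSupport_divMul F hVc)).integrableOn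
    refine (integral_pos_iff_support_of_nonneg_ae (hdiv.mono fun x hx => hx.le) hDi).2 ?_
    have hfull : volume.restrict (φ s ⁻¹' Z) (Function.support (divMul F V)) =
        volume.restrict (φ s ⁻¹' Z) Set.univ :=
      measure_congr (eventuallyEq_set.2 (hdiv.mono fun x hx => by simp [hx.ne']))
    rw [hfull, Measure.restrict_apply_univ]
    exact h.volume_preimage_pos hF s hZ hZ0
  have hid : φ 0 ⁻¹' Z = Z := by
    ext x
    simp [h.zero]
  have h0 := hVint 0 ⟨le_rfl, hτ.le⟩
  rw [hid] at h0
  rw [h.image_neg, ← hVint τ ⟨hτ.le, le_rfl⟩, ← h0]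
  linarith
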